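/- Let M, N, P ≥ 2 and let f: Art_{M,N,P} → ℤ be the homomorphism sending each of the generators a, b, c to 1 (this is well defined since the defining relators have zero exponent sum). Then the kernel of f is not a free group. -/

import Mathlib

/-!
Suppose the kernel `K` of the degree map `f` is free. The proof plays this against projective
representations of the Artin group `G = ArtinTri M N P`.

If `A, B` are elements of `GL₂(ℂ)` with `A² = B² = -1`, then `{A,B}_k = (A B⁻¹)^k {B,A}_k`
(`alt_eq_pow_mul_alt`). So if `A B⁻¹` has eigenvalues `exp (± i π k₁ / M)` with `0 < k₁ < M`, the
braid relation of length `M` holds up to the sign `(-1)^k₁`. One can choose `A, B, C` with all three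
angles prescribed (`exists_alt_eq`), which yields a homomorphism `ρ` from `G` to `GL₂(ℂ) / {±1}`.

Since `K` is free, the restriction of `ρ` to `K` lifts to a homomorphism into `GL₂(ℂ)`. Extending it
by `a^m ↦ A^m` gives a set-theoretic lift `S` of `ρ`, and `u_n(g) = A^{-n} S(a^n g)` satisfies
`u_n(g h) = u_n(g) u_{n + f(g)}(h)` (`exists_cocycle`). On each generator `u_n` differs from `A`,
`B`, `C` by a sign depending on `n`; write these signs as `p_n, q_n, r_n`. The first braid relation
then says that the product of `p_{n+i} q_{n+i}` over `i < M` is `(-1)^k₁` (`cocycle_rel`), and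
similarly for the others. Let `L` be a common multiple of `M, N, P` and multiply the three
relations over `0 ≤ i < L`: every sign occurs twice, so `k₁ L / M + k₂ L / N + k₃ L / P` is even
(`obstruction`). With `L` the least common multiple, the numerators `k_i` can be chosen to make this
sum odd (`exists_angles`), unless two of the labels are `2` and the third is odd.

In that exceptional case one generator, say `b`, commutes with the other two, and `P` is odd. The
square of `D = {a,c}_P` commutes with `a` and `c`, so `D² b^{-2 P}` is an element of `K` commuting
with `a c⁻¹`, and it has infinite order because its exponent sum in `b` is nonzero. Commuting
elements of a free group are powers of a common element (`exists_zpow_of_commute`), so a power of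
`D² b^{-2 P}` with exponent `j` equals a power of `a c⁻¹`, where `j ≠ 0` unless `a = c`. Comparing
exponent sums in `b` forces `j = 0`, whereas a dihedral quotient shows `a ≠ c`.
-/

/-- The alternating word `{x,y}_K = xyxy⋯` of length `K` starting with `x`. -/
def altWord {α : Type} : ℕ → FreeGroup α → FreeGroup α → FreeGroup α
  | 0, _, _ => 1
  | n + 1, x, y => x * altWord n y x

/-- Generators: `0 ↦ a`, `1 ↦ b`, `2 ↦ c`. -/
def ArtinTri.a : FreeGroup (Fin 3) := FreeGroup.of 0
def ArtinTri.b : FreeGroup (Fin 3) := FreeGroup.of 1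
def ArtinTri.c : FreeGroup (Fin 3) := FreeGroup.of 2

/-- Relators of the triangle Artin group
`Art_{M,N,P} = ⟨a,b,c | {a,b}_M = {b,a}_M, {b,c}_N = {c,b}_N, {c,a}_P = {a,c}_P⟩`. -/
def ArtinTri.rels (M N P : ℕ) : Set (FreeGroup (Fin 3)) :=
  { altWord M ArtinTri.a ArtinTri.b * (altWord M ArtinTri.b ArtinTri.a)⁻¹,
    altWord N ArtinTri.b ArtinTri.c * (altWord N ArtinTri.c ArtinTri.b)⁻¹,
    altWord P ArtinTri.c ArtinTri.a * (altWord P ArtinTri.a ArtinTri.c)⁻¹ }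

/-- The triangle Artin group `Art_{M,N,P}`. -/
abbrev ArtinTri (M N P : ℕ) : Type := PresentedGroup (ArtinTri.rels M N P)

/-! ### Alternating words -/

/-- The alternating word `{x,y}_K = xyxy⋯` of length `K`, evaluated in an arbitrary group. -/
def alt {G : Type} [Group G] : ℕ → G → G → G
  | 0, _, _ => 1
  | n + 1, x, y => x * alt n y x

theorem map_altWord {α G : Type} [Group G] (φ : FreeGroup α →* G) (n : ℕ) (x y : FreeGroup α) :
    φ (altWord n x y) = alt n (φ x) (φ y) := by
  induction n generalizing x y with
  | zero => simp [alt, altWord]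
  | succ n ih => simp [alt, altWord, ih]

theorem map_alt {G H : Type} [Group G] [Group H] (φ : G →* H) (n : ℕ) (x y : G) :
    φ (alt n x y) = alt n (φ x) (φ y) := by
  induction n generalizing x y with
  | zero => simp [alt]
  | succ n ih => simp [alt, ih]

theorem alt_two_mul {G : Type} [Group G] (n : ℕ) (x y : G) : alt (2 * n) x y = (x * y) ^ n := by
  induction n with
  | zero => simp [alt]
  | succ n ih => rw [show 2 * (n + 1) = 2 * n + 1 + 1 by ring, alt, alt, ih, pow_succ', mul_assoc]

/-- The universal property of `ArtinTri M N P`. -/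
theorem exists_hom_of_alt_eq {M N P : ℕ} {H : Type} [Group H] (A B C : H)
    (h₁ : alt M A B = alt M B A) (h₂ : alt N B C = alt N C B) (h₃ : alt P C A = alt P A C) :
    ∃ φ : ArtinTri M N P →* H, φ (PresentedGroup.of 0) = A ∧ φ (PresentedGroup.of 1) = B ∧
      φ (PresentedGroup.of 2) = C := by
  refine ⟨PresentedGroup.toGroup (f := ![A, B, C]) ?_, ?_, ?_, ?_⟩
  · rintro r (rfl | rfl | rfl) <;>
      simp [map_altWord, ArtinTri.a, ArtinTri.b, ArtinTri.c, h₁, h₂, h₃]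
  all_goals simp

theorem alt_rels (M N P : ℕ) :
    let a : ArtinTri M N P := PresentedGroup.of 0
    let b : ArtinTri M N P := PresentedGroup.of 1
    let c : ArtinTri M N P := PresentedGroup.of 2
    alt M a b = alt M b a ∧ alt N b c = alt N c b ∧ alt P c a = alt P a c := by
  have key : ∀ (K : ℕ) (x y : FreeGroup (Fin 3)),
      altWord K x y * (altWord K y x)⁻¹ ∈ ArtinTri.rels M N P →
      alt K (PresentedGroup.mk (ArtinTri.rels M N P) x) (PresentedGroup.mk _ y) =
        alt K (PresentedGroup.mk _ y) (PresentedGroup.mk _ x) := by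
    intro K x y h
    have := PresentedGroup.one_of_mem h
    rwa [map_mul, map_inv, mul_inv_eq_one, map_altWord, map_altWord] at this
  exact ⟨key M ArtinTri.a ArtinTri.b (by simp [ArtinTri.rels]),
    key N ArtinTri.b ArtinTri.c (by simp [ArtinTri.rels]),
    key P ArtinTri.c ArtinTri.a (by simp [ArtinTri.rels])⟩

/-! ### The lifting obstruction -/

/-- The product `p n * q (n + 1) * p (n + 2) * ⋯` with `k` factors: the sign picked up by an
alternating word under a twisted cocycle. -/
def altProd : ℕ → (ℤ → ℤˣ) → (ℤ → ℤˣ) → ℤ → ℤˣ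
  | 0, _, _, _ => 1
  | k + 1, p, q, n => p n * altProd k q p (n + 1)

theorem altProd_mul_altProd (k : ℕ) (p q : ℤ → ℤˣ) (n : ℤ) :
    altProd k p q n * altProd k q p n = ∏ i ∈ Finset.range k, p (n + i) * q (n + i) := by
  induction k generalizing p q n with
  | zero => simp [altProd]
  | succ k ih =>
    rw [altProd, altProd, mul_mul_mul_comm, ih, Finset.prod_range_succ']
    simp only [Nat.cast_add, Nat.cast_one, Nat.cast_zero, add_zero]
    rw [mul_comm (p n * q n), Finset.prod_congr rfl]
    · intro i _
      rw [mul_comm (p _), add_assoc, add_comm 1]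

/-- If every window of `M` consecutive values of `F` has product `ε`, then `t` adjacent windows have
product `ε ^ t`. -/
theorem prod_range_mul_of_blocks (M t : ℕ) (F : ℤ → ℤˣ) (ε : ℤˣ)
    (h : ∀ n : ℤ, ∏ i ∈ Finset.range M, F (n + i) = ε) :
    ∏ i ∈ Finset.range (M * t), F i = ε ^ t := by
  induction t with
  | zero => simp
  | succ t ih =>
    rw [Nat.mul_succ, Finset.prod_range_add, ih, pow_succ, ← h ((M * t : ℕ) : ℤ)]
    simp

section Cocycle

variable {G E : Type} [Group G] [Group E] (ι : ℤˣ →* E) (hι : ∀ s x, ι s * x = x * ι s)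
  (hinj : Function.Injective ι) (d : G →* Multiplicative ℤ) (u : ℤ → G → E)
  (u_one : ∀ n, u n 1 = 1) (u_mul : ∀ n g h, u n (g * h) = u n g * u (n + (d g).toAdd) h)
include hι u_one u_mul

/-- A twisted cocycle is determined on alternating words by its values on the two letters. -/
theorem cocycle_alt (k : ℕ) (x y : G) (hx : d x = Multiplicative.ofAdd 1)
    (hy : d y = Multiplicative.ofAdd 1) (X Y : E) (p q : ℤ → ℤˣ)
    (hp : ∀ n, u n x = ι (p n) * X) (hq : ∀ n, u n y = ι (q n) * Y) (n : ℤ) :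
    u n (alt k x y) = ι (altProd k p q n) * alt k X Y := by
  induction k generalizing x y X Y p q n with
  | zero => simp [alt, altProd, u_one]
  | succ k ih =>
    rw [alt, u_mul, ih y x hy hx Y X q p hq hp, hp, hx, alt, altProd, map_mul, toAdd_ofAdd,
      mul_assoc, mul_assoc, ← mul_assoc X, ← hι, mul_assoc]

include hinj in
/-- If `x, y` satisfy a braid relation of length `k` which their lifts `X, Y` satisfy only up to the
sign `ε`, then the signs of a twisted cocycle at `x` and `y` multiply to `ε` over every window of
length `k`. This holds because the two sides of the relation together use each of the signs
`p (n + i)`, `q (n + i)` once. -/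
theorem cocycle_rel (k : ℕ) (x y : G) (hx : d x = Multiplicative.ofAdd 1)
    (hy : d y = Multiplicative.ofAdd 1) (X Y : E) (p q : ℤ → ℤˣ)
    (hp : ∀ n, u n x = ι (p n) * X) (hq : ∀ n, u n y = ι (q n) * Y)
    (hxy : alt k x y = alt k y x) (ε : ℤˣ) (hXY : alt k X Y = ι ε * alt k Y X) (n : ℤ) :
    ∏ i ∈ Finset.range k, p (n + i) * q (n + i) = ε := by
  have h1 := cocycle_alt ι hι d u u_one u_mul k x y hx hy X Y p q hp hq n
  have h2 := cocycle_alt ι hι d u u_one u_mul k y x hy hx Y X q p hq hp n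
  rw [hxy, h2, hXY, ← mul_assoc, ← map_mul, mul_left_inj] at h1
  rw [← altProd_mul_altProd, hinj h1, ← mul_assoc, Int.units_mul_self, one_mul]

end Cocycle

/-- Homomorphisms from a free group lift through a quotient map. -/
theorem exists_lift_of_free {K E X : Type} [Group K] [Group E] (e : FreeGroup X ≃* K)
    (Z : Subgroup E) [Z.Normal] (ρ : K →* E ⧸ Z) :
    ∃ s : K →* E, ∀ k, (s k : E ⧸ Z) = ρ k := by
  refine ⟨(FreeGroup.lift fun i => (ρ (e (FreeGroup.of i))).out).comp e.symm.toMonoidHom, ?_⟩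
  have : (QuotientGroup.mk' Z).comp (FreeGroup.lift fun i => (ρ (e (FreeGroup.of i))).out) =
      ρ.comp e.toMonoidHom := by
    ext i
    simp
  intro k
  simpa using DFunLike.congr_fun this (e.symm k)

/-- A lift `s` of `ρ` from the kernel of `d` to `E` extends to all of `G`, not as a homomorphism but
as a family `u n` of set-theoretic lifts satisfying a cocycle identity twisted by the degree `d`. -/
theorem exists_cocycle {G E : Type} [Group G] [Group E] (Z : Subgroup E) [Z.Normal]
    (d : G →* Multiplicative ℤ) (ρ : G →* E ⧸ Z) (a : G) (A : E)
    (ha : d a = Multiplicative.ofAdd 1) (hA : (A : E ⧸ Z) = ρ a)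
    (s : d.ker →* E) (hs : ∀ k, (s k : E ⧸ Z) = ρ k) :
    ∃ u : ℤ → G → E, (∀ n, u n 1 = 1) ∧
      (∀ n g h, u n (g * h) = u n g * u (n + (d g).toAdd) h) ∧
      ∀ n g, (u n g : E ⧸ Z) = ρ g := by
  have hda : ∀ n : ℤ, (d (a ^ n)).toAdd = n := by intro n; simp [ha]
  have hker : ∀ g, g * a ^ (-(d g).toAdd) ∈ d.ker := by
    intro g
    rw [MonoidHom.mem_ker, map_mul]
    apply Multiplicative.toAdd.injective
    rw [toAdd_mul, hda]
    simp
  -- `S` extends `s` to all of `G` by sending `k * a ^ m` to `s k * A ^ m`.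
  let S : G → E := fun g => s ⟨_, hker g⟩ * A ^ (d g).toAdd
  have S_eq : ∀ (k : d.ker) (m : ℤ), S (k * a ^ m) = s k * A ^ m := by
    intro k m
    have hd : (d (k * a ^ m)).toAdd = m := by rw [map_mul, k.2, one_mul, hda]
    have hk : (⟨_, hker (k * a ^ m)⟩ : d.ker) = k := by
      ext
      simp only [hd]
      group
    simp only [S]
    rw [hk, hd]
  have S_mul : ∀ (k : d.ker) (g : G), S (k * g) = s k * S g := by
    intro k g
    have h := S_eq (k * ⟨_, hker g⟩) (d g).toAdd
    rw [map_mul, mul_assoc] at h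
    convert h using 2
    simp [mul_assoc]
  have S_pow : ∀ n : ℤ, S (a ^ n) = A ^ n := by
    intro n
    simpa using S_eq 1 n
  have S_mk : ∀ g, (S g : E ⧸ Z) = ρ g := by
    intro g
    simp only [S]
    rw [QuotientGroup.mk_mul, hs, QuotientGroup.mk_zpow, hA, ← map_zpow, ← map_mul]
    simp
  refine ⟨fun n g => A ^ (-n) * S (a ^ n * g), ?_, ?_, ?_⟩
  · intro n
    simp [S_pow]
  · intro n g h
    have hd : (d (a ^ n * g)).toAdd = n + (d g).toAdd := by rw [map_mul, toAdd_mul, hda]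
    have e1 := S_mul ⟨_, hker (a ^ n * g)⟩ (a ^ (n + (d g).toAdd) * h)
    have e2 := S_mul ⟨_, hker (a ^ n * g)⟩ (a ^ (n + (d g).toAdd))
    simp only [hd] at e1 e2
    rw [S_pow] at e2
    have t1 : a ^ n * g * a ^ (-(n + (d g).toAdd)) * (a ^ (n + (d g).toAdd) * h)
        = a ^ n * (g * h) := by group
    have t2 : a ^ n * g * a ^ (-(n + (d g).toAdd)) * a ^ (n + (d g).toAdd) = a ^ n * g := by group
    rw [t1] at e1
    rw [t2] at e2
    simp only
    rw [e1, e2]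
    group
  · intro n g
    rw [QuotientGroup.mk_mul, S_mk, QuotientGroup.mk_zpow, hA, map_mul, map_zpow]
    group

/-- If the kernel of the degree map is free, then the signs by which three elements `A`, `B`, `C` fail
to satisfy the Artin relations obey a parity condition: over a window whose length `L` is a common
multiple of the labels, each sign of the cocycle is counted by exactly two of the three relations. -/
theorem obstruction {M N P L : ℕ} {X E : Type} [Group E] (ι : ℤˣ →* E)
    (hι : ∀ s x, ι s * x = x * ι s) (hinj : Function.Injective ι)
    (A B C : E) (ε₁ ε₂ ε₃ : ℤˣ) (h₁ : alt M A B = ι ε₁ * alt M B A)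
    (h₂ : alt N B C = ι ε₂ * alt N C B) (h₃ : alt P C A = ι ε₃ * alt P A C)
    (f : ArtinTri M N P →* Multiplicative ℤ)
    (hf : ∀ i : Fin 3, f (PresentedGroup.of i) = Multiplicative.ofAdd 1)
    (e : FreeGroup X ≃* f.ker) (hM : M ∣ L) (hN : N ∣ L) (hP : P ∣ L) :
    ε₁ ^ (L / M) * ε₂ ^ (L / N) * ε₃ ^ (L / P) = 1 := by
  have hZ : ι.range.Normal := by
    refine ⟨?_⟩
    rintro _ ⟨s, rfl⟩ g
    exact ⟨s, by rw [← hι, mul_inv_cancel_right]⟩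
  have hquot : ∀ (s : ℤˣ) (x : E), ((ι s * x : E) : E ⧸ ι.range) = x := by
    intro s x
    rw [hι]
    exact QuotientGroup.mk_mul_of_mem x ⟨s, rfl⟩
  have hbar : ∀ (K : ℕ) (x y : E) (ε : ℤˣ), alt K x y = ι ε * alt K y x →
      alt K (x : E ⧸ ι.range) y = alt K (y : E ⧸ ι.range) x := by
    intro K x y ε h
    have := congrArg (QuotientGroup.mk' ι.range) h
    rw [QuotientGroup.mk'_apply, QuotientGroup.mk'_apply, hquot] at this
    simpa only [← QuotientGroup.mk'_apply, map_alt] using this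
  obtain ⟨ρ, ha, hb, hc⟩ := exists_hom_of_alt_eq (M := M) (N := N) (P := P)
    (A : E ⧸ ι.range) B C (hbar _ _ _ _ h₁) (hbar _ _ _ _ h₂) (hbar _ _ _ _ h₃)
  obtain ⟨s, hs⟩ := exists_lift_of_free e ι.range (ρ.comp f.ker.subtype)
  obtain ⟨u, u_one, u_mul, hu⟩ := exists_cocycle ι.range f ρ _ A (hf 0) ha.symm s hs
  have hsign : ∀ (x : ArtinTri M N P) (Y : E), ρ x = Y →
      ∃ p : ℤ → ℤˣ, ∀ n, u n x = ι (p n) * Y := by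
    intro x Y hx
    have : ∀ n, ∃ p, u n x = ι p * Y := by
      intro n
      obtain ⟨p, hp⟩ := QuotientGroup.eq.mp (((hu n x).trans hx).symm)
      exact ⟨p, by rw [hι, hp, mul_inv_cancel_left]⟩
    choose p hp using this
    exact ⟨p, hp⟩
  obtain ⟨p, hp⟩ := hsign _ A ha
  obtain ⟨q, hq⟩ := hsign _ B hb
  obtain ⟨r, hr⟩ := hsign _ C hc
  obtain ⟨r₁, r₂, r₃⟩ := alt_rels M N P
  have k₁ := prod_range_mul_of_blocks M (L / M) (fun i => p i * q i) ε₁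
    (cocycle_rel ι hι hinj f u u_one u_mul M _ _ (hf 0) (hf 1) A B p q hp hq r₁ ε₁ h₁)
  have k₂ := prod_range_mul_of_blocks N (L / N) (fun i => q i * r i) ε₂
    (cocycle_rel ι hι hinj f u u_one u_mul N _ _ (hf 1) (hf 2) B C q r hq hr r₂ ε₂ h₂)
  have k₃ := prod_range_mul_of_blocks P (L / P) (fun i => r i * p i) ε₃
    (cocycle_rel ι hι hinj f u u_one u_mul P _ _ (hf 2) (hf 0) C A r p hr hp r₃ ε₃ h₃)
  rw [Nat.mul_div_cancel' hM] at k₁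
  rw [Nat.mul_div_cancel' hN] at k₂
  rw [Nat.mul_div_cancel' hP] at k₃
  rw [← k₁, ← k₂, ← k₃, ← Finset.prod_mul_distrib, ← Finset.prod_mul_distrib]
  -- Every sign occurs exactly twice.
  refine Finset.prod_eq_one fun i _ => ?_
  calc p i * q i * (q i * r i) * (r i * p i) = (p i * p i) * (q i * q i) * (r i * r i) := by
        ac_rfl
    _ = 1 := by simp only [Int.units_mul_self, mul_one]

/-! ### The exceptional case -/

/-- Commuting elements of a free group lie in a common cyclic subgroup: by Nielsen–Schreier the
subgroup they generate is free, and being commutative it has rank at most one. -/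
theorem exists_zpow_of_commute {X : Type} (x y : FreeGroup X) (h : x * y = y * x) :
    ∃ (g : FreeGroup X) (i j : ℤ), x = g ^ i ∧ y = g ^ j := by
  let H := Subgroup.closure {x, y}
  have hcomm : ∀ u v : H, u * v = v * u := by
    have := Subgroup.isMulCommutative_closure (k := {x, y}) (by
      rintro _ (rfl | rfl) _ (rfl | rfl) <;> simp [h])
    intro u v
    exact this.is_comm.comm u v
  let φ := IsFreeGroup.toFreeGroup H
  have hsub : Subsingleton (IsFreeGroup.Generators H) := by
    refine ⟨fun s t => ?_⟩
    by_contra hst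
    classical
    -- Distinct generators can be sent to noncommuting permutations.
    let τ : IsFreeGroup.Generators H → Equiv.Perm (Fin 3) :=
      fun r => if r = s then Equiv.swap 0 1 else Equiv.swap 1 2
    have h1 := congrArg φ (hcomm (φ.symm (FreeGroup.of s)) (φ.symm (FreeGroup.of t)))
    simp only [map_mul, MulEquiv.apply_symm_apply] at h1
    have h2 := congrArg (FreeGroup.lift τ) h1
    have hts : t ≠ s := fun h => hst h.symm
    simp only [map_mul, FreeGroup.lift_apply_of, τ, if_true, if_neg hts] at h2
    revert h2
    decide
  have hcyc : IsCyclic H := by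
    rcases isEmpty_or_nonempty (IsFreeGroup.Generators H) with h0 | h0
    · have : Subsingleton H := φ.toEquiv.subsingleton
      infer_instance
    · obtain ⟨s⟩ := h0
      have : Unique (IsFreeGroup.Generators H) := uniqueOfSubsingleton s
      exact isCyclic_of_surjective φ.symm φ.symm.surjective
  obtain ⟨g, hg⟩ := hcyc.exists_generator
  obtain ⟨i, hi⟩ := hg ⟨x, Subgroup.subset_closure (by simp)⟩
  obtain ⟨j, hj⟩ := hg ⟨y, Subgroup.subset_closure (by simp)⟩
  exact ⟨g, i, j, by simpa using (congrArg Subtype.val hi).symm,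
    by simpa using (congrArg Subtype.val hj).symm⟩

/-- When `{x,y}_K` with `K` odd equals `{y,x}_K`, this says that conjugation by it swaps
`x` and `y`. -/
theorem mul_alt_odd {G : Type} [Group G] (n : ℕ) (x y : G) :
    y * alt (2 * n + 1) x y = alt (2 * n + 1) y x * x := by
  have : y * (x * y) ^ n = (y * x) ^ n * y :=
    SemiconjBy.pow_right (show y * (x * y) = (y * x) * y by rw [mul_assoc]) n
  rw [alt, alt, alt_two_mul, alt_two_mul, this, ← mul_assoc, ← pow_succ', mul_assoc, pow_succ]

/-- If `A² = B²` then `{A,B}_k` and `{B,A}_k` differ by the `k`-th power of `A B⁻¹`, the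
rotation of the dihedral configuration formed by `A` and `B`. -/
theorem alt_eq_pow_mul_alt {E : Type} [Group E] (k : ℕ) (A B : E) (h : A * A = B * B) :
    alt k A B = (A * B⁻¹) ^ k * alt k B A := by
  induction k generalizing A B with
  | zero => simp [alt]
  | succ k ih =>
    have h' : A * (B * A⁻¹) = (A * B⁻¹) * A := by
      have : B⁻¹ * A = B * A⁻¹ := by
        rw [inv_mul_eq_iff_eq_mul, ← mul_assoc, ← h, mul_inv_cancel_right]
      rw [mul_assoc, this]
    have h2 : A * (B * A⁻¹) ^ k = (A * B⁻¹) ^ k * A := (SemiconjBy.pow_right h' k)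
    rw [alt, ih B A h.symm, ← mul_assoc, h2, alt, pow_succ]
    group

/-- The mechanism behind the exceptional case: `f` is the degree and `g` counts occurrences of `b`.
If `b` commutes with `a` and `c`, the square of `{a,c}_P` with `P` odd is central in
`⟨a, c⟩`, and corrected by a power of `b` it becomes a nontrivial element of the kernel commuting
with `a c⁻¹`. -/
theorem not_free_of_commute {G X : Type} [Group G] (n : ℕ) (a b c : G)
    (hba : a * b = b * a) (hbc : c * b = b * c)
    (hac : alt (2 * n + 1) a c = alt (2 * n + 1) c a) (hne : a ≠ c)
    (f g : G →* Multiplicative ℤ) (fa : f a = Multiplicative.ofAdd 1)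
    (fb : f b = Multiplicative.ofAdd 1) (fc : f c = Multiplicative.ofAdd 1)
    (ga : g a = 1) (gb : g b = Multiplicative.ofAdd 1) (gc : g c = 1)
    (e : FreeGroup X ≃* f.ker) : False := by
  set D := alt (2 * n + 1) a c with hD
  have alt_self : ∀ (k : ℕ) (x : Multiplicative ℤ), alt k x x = x ^ k := by
    intro k x
    induction k with
    | zero => rw [alt, pow_zero]
    | succ k ih => rw [alt, ih, pow_succ']
  have h1 : a * D = D * c := by
    have := mul_alt_odd n c a
    rwa [← hac] at this
  have h2 : c * D = D * a := by
    have := mul_alt_odd n a c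
    rwa [← hac] at this
  have hDb : Commute b D := by
    have : ∀ k x y, Commute b x → Commute b y → Commute b (alt k x y) := by
      intro k
      induction k with
      | zero => intro x y _ _; exact Commute.one_right b
      | succ k ih => intro x y hx hy; exact hx.mul_right (ih y x hy hx)
    exact this _ _ _ hba.symm hbc.symm
  let z : G := D * D * (b ^ (2 * (2 * n + 1)))⁻¹
  have hz : z ∈ f.ker := by
    rw [MonoidHom.mem_ker]
    simp only [z, hD, map_mul, map_alt, map_inv, map_pow, fa, fb, fc, alt_self]
    group
  have hy : a * c⁻¹ ∈ f.ker := by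
    rw [MonoidHom.mem_ker]
    simp [fa, fc]
  have hcomm : Commute z (a * c⁻¹) := by
    have ca : Commute (D * D) a := by
      change D * D * a = a * (D * D)
      rw [mul_assoc, ← h2, ← mul_assoc, ← h1, mul_assoc]
    have cc : Commute (D * D) c := by
      change D * D * c = c * (D * D)
      rw [mul_assoc, ← h1, ← mul_assoc, ← h2, mul_assoc]
    have ba : Commute b a := hba.symm
    have bc : Commute b c := hbc.symm
    exact ((ca.mul_right cc.inv_right).mul_left
      ((ba.mul_right bc.inv_right).pow_left _).inv_left)
  have hK : (⟨z, hz⟩ : f.ker) * ⟨_, hy⟩ = ⟨_, hy⟩ * ⟨z, hz⟩ := Subtype.ext hcomm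
  have hF := congrArg e.symm hK
  rw [map_mul, map_mul] at hF
  obtain ⟨w, i, j, hi, hj⟩ := exists_zpow_of_commute _ _ hF
  rw [MulEquiv.symm_apply_eq, map_zpow] at hi hj
  have hi' : z = (e w : G) ^ i := congrArg Subtype.val hi
  have hj' : a * c⁻¹ = (e w : G) ^ j := congrArg Subtype.val hj
  have hzj : z ^ j = (a * c⁻¹) ^ i := by
    rw [hi', hj', ← zpow_mul, ← zpow_mul, mul_comm]
  have hg := congrArg (fun t => (g t).toAdd) hzj
  simp only [z, hD, map_mul, map_alt, map_inv, map_pow, map_zpow, ga, gb, gc, alt_self] at hg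
  simp at hg
  have hj0 : j = 0 := by
    rcases hg with h | h
    · exact h
    · omega
  rw [hj0, zpow_zero, mul_inv_eq_one] at hj'
  exact hne hj'

/-! ### Matrices -/

/-- Powers of an element with characteristic polynomial `(t - l) (t - m)`, where `l m = 1`, in a form
free of division by `l - m`. -/
theorem pow_eq_of_quadratic {R : Type} [Ring R] [Algebra ℂ R] (D : R) (l m : ℂ) (hlm : l * m = 1)
    (hD : D * D = (l + m) • D - 1) (n : ℕ) :
    (l - m) • D ^ n = (l ^ n - m ^ n) • D - (l ^ n * m - m ^ n * l) • (1 : R) := by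
  induction n with
  | zero =>
    rw [pow_zero, pow_zero, pow_zero, sub_self, zero_smul, zero_sub, one_mul, one_mul, ← neg_smul,
      neg_sub]
  | succ n ih =>
    rw [pow_succ, ← smul_mul_assoc, ih, sub_mul, smul_mul_assoc, hD, smul_mul_assoc, one_mul]
    have e1 : l ^ (n + 1) * m = l ^ n := by rw [pow_succ, mul_assoc, hlm, mul_one]
    have e2 : m ^ (n + 1) * l = m ^ n := by rw [pow_succ, mul_assoc, mul_comm m, hlm, mul_one]
    rw [e1, e2]
    rw [smul_sub, smul_smul, sub_right_comm, ← sub_smul]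
    congr 2
    ring

open Matrix in
/-- Three complex structures on `ℂ²` whose pairwise products have prescribed traces. The pair `A, B`
is put in normal form; this is where `l₁ ≠ m₁` is needed, to solve for `C`. -/
theorem exists_matrices (l₁ m₁ t₂ t₃ : ℂ) (h₁ : l₁ * m₁ = 1) (hne : l₁ - m₁ ≠ 0) :
    ∃ A B C : Matrix (Fin 2) (Fin 2) ℂ, A * A = -1 ∧ B * B = -1 ∧ C * C = -1 ∧
      (A * B) * (A * B) = (l₁ + m₁) • (-(A * B)) - 1 ∧
      (B * C) * (B * C) = t₂ • (-(B * C)) - 1 ∧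
      (C * A) * (C * A) = t₃ • (-(C * A)) - 1 := by
  obtain ⟨q, r, hqr, hq2⟩ : ∃ q r : ℂ, q - r = t₃ ∧ l₁ * q - m₁ * r = t₂ := by
    refine ⟨(t₂ - m₁ * t₃) / (l₁ - m₁), (t₂ - m₁ * t₃) / (l₁ - m₁) - t₃, by ring, ?_⟩
    field_simp
    ring
  obtain ⟨p, hp⟩ : ∃ p : ℂ, p * p = -1 - q * r := by
    obtain ⟨p, hp⟩ := IsAlgClosed.exists_pow_nat_eq (-1 - q * r) two_pos
    exact ⟨p, by rw [← sq, hp]⟩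
  subst hqr hq2
  refine ⟨!![0, 1; -1, 0], !![0, m₁; -l₁, 0], !![p, q; r, -p], ?_, ?_, ?_, ?_, ?_, ?_⟩ <;>
  · ext i j
    -- Each entry holds identically or modulo `l₁ m₁ = 1` and `det C = 1`.
    fin_cases i <;> fin_cases j <;> simp [Matrix.mul_apply, Fin.sum_univ_two] <;>
    first | ring1 | linear_combination h₁ | linear_combination -h₁ | linear_combination hp |
      linear_combination l₁ * m₁ * hp - h₁

/-- The pair `l, m = exp (± i π k / M)`. -/
theorem exists_root (M k : ℕ) (hk : 0 < k) (hkM : k < M) :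
    ∃ l m : ℂ, l * m = 1 ∧ l - m ≠ 0 ∧ l ^ M = (-1) ^ k ∧ m ^ M = (-1) ^ k := by
  have hζ := Complex.isPrimitiveRoot_exp (2 * M) (by omega)
  set ζ := Complex.exp (2 * Real.pi * Complex.I / (2 * M : ℕ))
  have hζ0 : ζ ≠ 0 := hζ.ne_zero (by omega)
  have hζM : ζ ^ M = -1 := by
    have h2 : ζ ^ M * ζ ^ M = 1 := by rw [← pow_add, ← two_mul, hζ.pow_eq_one]
    rcases mul_self_eq_one_iff.mp h2 with h | h
    · exact absurd h (hζ.pow_ne_one_of_pos_of_lt (by omega) (by omega))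
    · exact h
  have hlM : (ζ ^ k) ^ M = (-1) ^ k := by rw [← pow_mul, mul_comm, pow_mul, hζM]
  refine ⟨ζ ^ k, (ζ ^ k)⁻¹, mul_inv_cancel₀ (pow_ne_zero _ hζ0), ?_, hlM, ?_⟩
  · intro h
    have : ζ ^ (2 * k) = 1 := by
      rw [two_mul, pow_add]
      nth_rw 1 [sub_eq_zero.mp h]
      exact inv_mul_cancel₀ (pow_ne_zero _ hζ0)
    exact hζ.pow_ne_one_of_pos_of_lt (by omega) (by omega) this
  · rw [inv_pow, hlM]
    rcases Nat.even_or_odd k with h | h <;> simp [h.neg_one_pow]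

/-- For `0 < k < M` the trace `2 cos (π k / M)` forces a `2 × 2` matrix of determinant one to have
`M`-th power `(-1) ^ k`. Determinant one and the trace enter through the Cayley–Hamilton relation. -/
theorem exists_trace (M k : ℕ) (hk : 0 < k) (hkM : k < M) :
    ∃ l m : ℂ, l * m = 1 ∧ l - m ≠ 0 ∧ ∀ D : Matrix (Fin 2) (Fin 2) ℂ,
      D * D = (l + m) • D - 1 → D ^ M = (-1) ^ k := by
  obtain ⟨l, m, hlm, hne, hl, hm⟩ := exists_root M k hk hkM
  refine ⟨l, m, hlm, hne, fun D hD => ?_⟩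
  have h := pow_eq_of_quadratic D l m hlm hD M
  rw [hl, hm, sub_self, zero_smul, zero_sub, ← mul_sub, ← neg_smul, ← mul_neg, neg_sub,
    mul_comm, mul_smul] at h
  rw [smul_right_injective _ hne h]
  rcases Nat.even_or_odd k with h | h <;> simp [h.neg_one_pow]

/-- The central embedding of `{±1}` into the invertible complex `2 × 2` matrices. -/
noncomputable def signUnit : ℤˣ →* (Matrix (Fin 2) (Fin 2) ℂ)ˣ :=
  Units.map (Int.castRingHom (Matrix (Fin 2) (Fin 2) ℂ)).toMonoidHom

theorem signUnit_comm (s : ℤˣ) (x : (Matrix (Fin 2) (Fin 2) ℂ)ˣ) :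
    signUnit s * x = x * signUnit s := by
  ext1
  exact Int.cast_commute (s : ℤ) (x : Matrix (Fin 2) (Fin 2) ℂ)

theorem signUnit_injective : Function.Injective signUnit :=
  haveI : CharZero (Matrix (Fin 2) (Fin 2) ℂ) := algebraRat.charZero _
  Units.map_injective (RingHom.injective_int _)

/-- Elements of `GL₂(ℂ)` satisfying the three Artin relations up to prescribed signs: the rotations
`A B⁻¹`, `B C⁻¹`, `C A⁻¹` have angles `π k₁ / M`, `π k₂ / N`, `π k₃ / P`. -/
theorem exists_alt_eq {M N P : ℕ} (k₁ k₂ k₃ : ℕ) (h₁ : 0 < k₁) (h₁' : k₁ < M) (h₂ : 0 < k₂)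
    (h₂' : k₂ < N) (h₃ : 0 < k₃) (h₃' : k₃ < P) :
    ∃ A B C : (Matrix (Fin 2) (Fin 2) ℂ)ˣ,
      alt M A B = signUnit ((-1) ^ k₁) * alt M B A ∧ alt N B C = signUnit ((-1) ^ k₂) * alt N C B ∧
      alt P C A = signUnit ((-1) ^ k₃) * alt P A C := by
  obtain ⟨l₁, m₁, hlm, hne, H₁⟩ := exists_trace M k₁ h₁ h₁'
  obtain ⟨l₂, m₂, -, -, H₂⟩ := exists_trace N k₂ h₂ h₂'
  obtain ⟨l₃, m₃, -, -, H₃⟩ := exists_trace P k₃ h₃ h₃'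
  obtain ⟨A, B, C, hA, hB, hC, hAB, hBC, hCA⟩ :=
    exists_matrices l₁ m₁ (l₂ + m₂) (l₃ + m₃) hlm hne
  let unit : ∀ X : Matrix (Fin 2) (Fin 2) ℂ, X * X = -1 → (Matrix (Fin 2) (Fin 2) ℂ)ˣ :=
    fun X hX => ⟨X, -X, by rw [mul_neg, hX, neg_neg], by rw [neg_mul, hX, neg_neg]⟩
  have key : ∀ (K k : ℕ) (X Y : Matrix (Fin 2) (Fin 2) ℂ) (hX : X * X = -1) (hY : Y * Y = -1),
      (-(X * Y)) ^ K = (-1) ^ k →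
      alt K (unit X hX) (unit Y hY) =
        signUnit ((-1) ^ k) * alt K (unit Y hY) (unit X hX) := by
    intro K k X Y hX hY h
    rw [alt_eq_pow_mul_alt K (unit X hX) (unit Y hY) (by ext1; exact hX.trans hY.symm)]
    congr 1
    ext1
    have : ((unit X hX * (unit Y hY)⁻¹ : (Matrix (Fin 2) (Fin 2) ℂ)ˣ) :
        Matrix (Fin 2) (Fin 2) ℂ) = -(X * Y) := mul_neg X Y
    rw [Units.val_pow_eq_pow_val, this, h]
    simp [signUnit]
  exact ⟨unit A hA, unit B hB, unit C hC,
    key M k₁ A B hA hB (H₁ _ (by rw [neg_mul_neg, hAB])),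
    key N k₂ B C hB hC (H₂ _ (by rw [neg_mul_neg, hBC])),
    key P k₃ C A hC hA (H₃ _ (by rw [neg_mul_neg, hCA]))⟩

/-! ### Choosing the angles -/

/-- Outside the exceptional labels, the numerators of the three angles can be chosen so that the
parity condition of `obstruction` fails. All of them are `1`, except that one has to be `2` when
exactly two of `L / M`, `L / N`, `L / P` are odd. -/
theorem exists_angles (M N P : ℕ) (hM : 2 ≤ M) (hN : 2 ≤ N) (hP : 2 ≤ P)
    (e₁ : ¬ (M = 2 ∧ N = 2 ∧ Odd P)) (e₂ : ¬ (M = 2 ∧ P = 2 ∧ Odd N))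
    (e₃ : ¬ (N = 2 ∧ P = 2 ∧ Odd M)) :
    ∃ L k₁ k₂ k₃ : ℕ, M ∣ L ∧ N ∣ L ∧ P ∣ L ∧ (0 < k₁ ∧ k₁ < M) ∧ (0 < k₂ ∧ k₂ < N) ∧
      (0 < k₃ ∧ k₃ < P) ∧ Odd (k₁ * (L / M) + k₂ * (L / N) + k₃ * (L / P)) := by
  obtain ⟨L, x, y, z, hx, hy, hz, hodd⟩ : ∃ L x y z : ℕ, L = M * x ∧ L = N * y ∧ L = P * z ∧
      (Odd x ∨ Odd y ∨ Odd z) := by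
    obtain ⟨x, hx⟩ : M ∣ (M.lcm N).lcm P := (Nat.dvd_lcm_left M N).trans (Nat.dvd_lcm_left _ _)
    obtain ⟨y, hy⟩ : N ∣ (M.lcm N).lcm P := (Nat.dvd_lcm_right M N).trans (Nat.dvd_lcm_left _ _)
    obtain ⟨z, hz⟩ : P ∣ (M.lcm N).lcm P := Nat.dvd_lcm_right _ _
    refine ⟨_, x, y, z, hx, hy, hz, ?_⟩
    -- If all three quotients were even, half of the least common multiple would be a multiple.
    by_contra! h
    obtain ⟨⟨x', hx'⟩, ⟨y', hy'⟩, ⟨z', hz'⟩⟩ :=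
      And.imp Nat.not_odd_iff_even.mp (And.imp Nat.not_odd_iff_even.mp Nat.not_odd_iff_even.mp) h
    have hL : 0 < (M.lcm N).lcm P :=
      Nat.lcm_pos (Nat.lcm_pos (by omega) (by omega)) (by omega)
    have e1 : (M.lcm N).lcm P = 2 * (M * x') := by rw [hx, hx']; ring
    have e2 : (M.lcm N).lcm P = 2 * (N * y') := by rw [hy, hy']; ring
    have e3 : (M.lcm N).lcm P = 2 * (P * z') := by rw [hz, hz']; ring
    have hd : (M.lcm N).lcm P ∣ M * x' :=
      Nat.lcm_dvd (Nat.lcm_dvd (Dvd.intro _ rfl) ⟨y', by omega⟩) ⟨z', by omega⟩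
    have := Nat.le_of_dvd (by omega) hd
    omega
  have hxd : L / M = x := by rw [hx, Nat.mul_div_cancel_left _ (by omega)]
  have hyd : L / N = y := by rw [hy, Nat.mul_div_cancel_left _ (by omega)]
  have hzd : L / P = z := by rw [hz, Nat.mul_div_cancel_left _ (by omega)]
  -- When `u` is odd and `w` even, doubling an angle at `A` or `B` is possible: one exceeds `2`.
  have excl : ∀ A B C u v w : ℕ, ¬ (A = 2 ∧ B = 2 ∧ Odd C) → L = A * u → L = C * w → Odd u →
      Even w → A = 2 → B ≠ 2 := by
    rintro A B C u v w he hu hw huo ⟨w', rfl⟩ rfl rfl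
    refine he ⟨rfl, rfl, ?_⟩
    have : u = C * w' := by
      have : 2 * u = 2 * (C * w') := by rw [← hu, hw]; ring
      omega
    rw [this] at huo
    exact (Nat.odd_mul.mp huo).1
  suffices ∃ k₁ k₂ k₃ : ℕ, (0 < k₁ ∧ k₁ < M) ∧ (0 < k₂ ∧ k₂ < N) ∧
      (0 < k₃ ∧ k₃ < P) ∧ Odd (k₁ * x + k₂ * y + k₃ * z) by
    obtain ⟨k₁, k₂, k₃, h⟩ := this
    exact ⟨L, k₁, k₂, k₃, ⟨x, hx⟩, ⟨y, hy⟩, ⟨z, hz⟩, by rwa [hxd, hyd, hzd]⟩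
  rcases Nat.even_or_odd x with px | px <;> rcases Nat.even_or_odd y with py | py <;>
    rcases Nat.even_or_odd z with pz | pz
  · simp only [← Nat.not_even_iff_odd, px, py, pz] at hodd; tauto
  · exact ⟨1, 1, 1, by omega, by omega, by omega, by grind⟩
  · exact ⟨1, 1, 1, by omega, by omega, by omega, by grind⟩
  · by_cases h : N = 2
    · have := excl N P M y z x (by tauto) hy hx py px h
      exact ⟨1, 1, 2, by omega, by omega, by omega, by grind⟩
    · exact ⟨1, 2, 1, by omega, by omega, by omega, by grind⟩
  · exact ⟨1, 1, 1, by omega, by omega, by omega, by grind⟩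
  · by_cases h : M = 2
    · have := excl M P N x z y (by tauto) hx hy px py h
      exact ⟨1, 1, 2, by omega, by omega, by omega, by grind⟩
    · exact ⟨2, 1, 1, by omega, by omega, by omega, by grind⟩
  · by_cases h : M = 2
    · have := excl M N P x y z (by tauto) hx hz px pz h
      exact ⟨1, 2, 1, by omega, by omega, by omega, by grind⟩
    · exact ⟨2, 1, 1, by omega, by omega, by omega, by grind⟩
  · exact ⟨1, 1, 1, by omega, by omega, by omega, by grind⟩

/-- Two adjacent reflections of a `K`-gon satisfy the braid relation of length `K`. -/
theorem exists_dihedral_pair (K : ℕ) (hK : 2 ≤ K) :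
    ∃ A B : DihedralGroup K, A ≠ B ∧ alt K A B = alt K B A := by
  have : Fact (1 < K) := ⟨hK⟩
  refine ⟨.sr 0, .sr 1, by simp, ?_⟩
  rw [alt_eq_pow_mul_alt _ _ _ (by simp)]
  simp

theorem alt_two_one {G : Type} [Group G] (x : G) : alt 2 x 1 = alt 2 1 x := by simp [alt]

/-- Let `f : Art_{M,N,P} → ℤ` be the homomorphism sending each of the
generators `a, b, c` to `1` (it exists and is unique since the defining relators have
zero exponent sum). Then the kernel of `f` is not a free group. -/
theorem artinTri_degree_kernel_not_free (M N P : ℕ) (hM : 2 ≤ M) (hN : 2 ≤ N) (hP : 2 ≤ P) :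
    (∃ f : ArtinTri M N P →* Multiplicative ℤ,
      ∀ i : Fin 3, f (PresentedGroup.of i) = Multiplicative.ofAdd 1) ∧
    ∀ f : ArtinTri M N P →* Multiplicative ℤ,
      (∀ i : Fin 3, f (PresentedGroup.of i) = Multiplicative.ofAdd 1) →
      ¬ ∃ ι : Type, Nonempty (FreeGroup ι ≃* ↥f.ker) := by
  constructor
  · obtain ⟨f, h0, h1, h2⟩ := exists_hom_of_alt_eq (M := M) (N := N) (P := P)
      (Multiplicative.ofAdd (1 : ℤ)) (Multiplicative.ofAdd 1) (Multiplicative.ofAdd 1) rfl rfl rfl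
    refine ⟨f, fun i => ?_⟩
    fin_cases i
    exacts [h0, h1, h2]
  rintro f hf ⟨X, ⟨e⟩⟩
  obtain ⟨r₁, r₂, r₃⟩ := alt_rels M N P
  let t : Multiplicative ℤ := Multiplicative.ofAdd 1
  by_cases e₁ : M = 2 ∧ N = 2 ∧ Odd P
  · obtain ⟨rfl, rfl, n, rfl⟩ := e₁
    -- The dihedral quotient killing `b` separates `a` from `c`; `g` counts occurrences of `b`.
    obtain ⟨A, B, hne, hAB⟩ := exists_dihedral_pair _ hP
    obtain ⟨φ, hφ0, -, hφ2⟩ := exists_hom_of_alt_eq (M := 2) (N := 2) (P := 2 * n + 1) A 1 B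
      (alt_two_one A) (alt_two_one B).symm hAB.symm
    obtain ⟨g, g0, g1, g2⟩ := exists_hom_of_alt_eq (M := 2) (N := 2) (P := 2 * n + 1) 1 t 1
      (alt_two_one t).symm (alt_two_one t) rfl
    exact not_free_of_commute n _ _ _ (by simpa [alt] using r₁) (by simpa [alt] using r₂.symm)
      r₃.symm (fun h => hne (by rw [← hφ0, ← hφ2, h])) f g (hf 0) (hf 1) (hf 2) g0 g1 g2 e
  by_cases e₂ : M = 2 ∧ P = 2 ∧ Odd N
  · obtain ⟨rfl, rfl, n, rfl⟩ := e₂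
    obtain ⟨A, B, hne, hAB⟩ := exists_dihedral_pair _ hN
    obtain ⟨φ, -, hφ1, hφ2⟩ := exists_hom_of_alt_eq (M := 2) (N := 2 * n + 1) (P := 2) 1 A B
      (alt_two_one A).symm hAB (alt_two_one B)
    obtain ⟨g, g0, g1, g2⟩ := exists_hom_of_alt_eq (M := 2) (N := 2 * n + 1) (P := 2) t 1 1
      (alt_two_one t) rfl (alt_two_one t).symm
    exact not_free_of_commute n _ _ _ (by simpa [alt] using r₁.symm) (by simpa [alt] using r₃)
      r₂ (fun h => hne (by rw [← hφ1, ← hφ2, h])) f g (hf 1) (hf 0) (hf 2) g1 g0 g2 e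
  by_cases e₃ : N = 2 ∧ P = 2 ∧ Odd M
  · obtain ⟨rfl, rfl, n, rfl⟩ := e₃
    obtain ⟨A, B, hne, hAB⟩ := exists_dihedral_pair _ hM
    obtain ⟨φ, hφ0, hφ1, -⟩ := exists_hom_of_alt_eq (M := 2 * n + 1) (N := 2) (P := 2) A B 1
      hAB (alt_two_one B) (alt_two_one A).symm
    obtain ⟨g, g0, g1, g2⟩ := exists_hom_of_alt_eq (M := 2 * n + 1) (N := 2) (P := 2) 1 1 t
      rfl (alt_two_one t).symm (alt_two_one t)
    exact not_free_of_commute n _ _ _ (by simpa [alt] using r₃.symm) (by simpa [alt] using r₂)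
      r₁ (fun h => hne (by rw [← hφ0, ← hφ1, h])) f g (hf 0) (hf 2) (hf 1) g0 g2 g1 e
  obtain ⟨L, k₁, k₂, k₃, dM, dN, dP, ⟨h₁, h₁'⟩, ⟨h₂, h₂'⟩, ⟨h₃, h₃'⟩, hodd⟩ :=
    exists_angles M N P hM hN hP e₁ e₂ e₃
  obtain ⟨A, B, C, hAB, hBC, hCA⟩ := exists_alt_eq k₁ k₂ k₃ h₁ h₁' h₂ h₂' h₃ h₃'
  have h := obstruction signUnit signUnit_comm signUnit_injective A B C _ _ _ hAB hBC hCA f hf e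
    dM dN dP
  rw [← pow_mul, ← pow_mul, ← pow_mul, ← pow_add, ← pow_add, hodd.neg_one_pow] at h
  exact absurd h (by decide)
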